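/- Let λ ∈ ℝ, let α ∈ (0, 1], and let φ : ℝ → ℂ be a bounded measurable function with compact support satisfying the Hölder condition at λ: there is a constant C ≥ 0 with |φ(x) − φ(λ)| ≤ C·|x−λ|^α for all x ∈ ℝ. Then there exists L ∈ ℂ such that ∫_ℝ φ(x) · (x−λ) / ((x−λ)² + y²) dx tends to L as y → 0 from the right. -/

import Mathlib

open Filter Topology MeasureTheory

/-!
The conjugate Poisson kernel `t / (t² + y²)` is odd in `t`, so it only sees the odd part of `φ`
about `lam`: its integral against `φ` is half the integral of
`t² / (t² + y²) · (φ (lam + t) - φ (lam - t)) / t`. A Hölder condition at `lam` is more than enough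
for Dini's condition that the quotient is integrable; since the factor `t² / (t² + y²)` is at most
`1` and tends to `1` as `y → 0`, dominated convergence applies.
-/

section OddKernel

variable {G E : Type*} [AddCommGroup G] [MeasurableSpace G] [MeasurableAdd G] [MeasurableNeg G]
  {μ : Measure G} [μ.IsAddRightInvariant] [μ.IsNegInvariant]
  [NormedAddCommGroup E] [NormedSpace ℝ E]

theorem integral_odd_smul_eq_half_integral_smul_sub {k : G → ℝ} (hk : Function.Odd k)
    {φ : G → E} {a : G} (hint : Integrable (fun x => k (x - a) • φ x) μ) :
    ∫ x, k (x - a) • φ x ∂μ = (1 / 2 : ℝ) • ∫ t, k t • (φ (a + t) - φ (a - t)) ∂μ := by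
  set g : G → E := fun t => k t • φ (a + t) with hg
  have hg_int : Integrable g μ := by
    simpa only [hg, add_sub_cancel_right, add_comm a] using hint.comp_add_right a
  have hg_integral : ∫ x, k (x - a) • φ x ∂μ = ∫ t, g t ∂μ := by
    simpa only [hg, add_sub_cancel] using integral_sub_right_eq_self g a
  have hg_symm (t : G) : k t • (φ (a + t) - φ (a - t)) = g t + g (-t) := by
    simp only [hg, hk t, neg_smul, smul_add, smul_neg, sub_eq_add_neg]
  rw [hg_integral]
  simp only [hg_symm]
  rw [integral_add hg_int hg_int.comp_neg, integral_neg_eq_self, ← two_smul ℝ, smul_smul]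
  norm_num

end OddKernel

/-- The conjugate Poisson kernel of the upper half-plane, without the usual factor `1 / π`; its
convolution with a function gives the harmonic conjugate of the Poisson extension. -/
noncomputable def conjugatePoissonKernel (y t : ℝ) : ℝ :=
  t / (t ^ 2 + y ^ 2)

namespace conjugatePoissonKernel

theorem odd (y : ℝ) : Function.Odd (conjugatePoissonKernel y) := fun t => by
  simp only [conjugatePoissonKernel, neg_sq, neg_div]

theorem eq_mul_inv (y t : ℝ) : conjugatePoissonKernel y t = t ^ 2 / (t ^ 2 + y ^ 2) * t⁻¹ := by
  rcases eq_or_ne t 0 with rfl | ht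
  · simp [conjugatePoissonKernel]
  · simp only [conjugatePoissonKernel]
    field_simp

theorem abs_le {y : ℝ} (hy : 0 < y) (t : ℝ) : |conjugatePoissonKernel y t| ≤ 1 / (2 * y) := by
  have hden : 0 < t ^ 2 + y ^ 2 := by positivity
  rw [conjugatePoissonKernel, abs_div, abs_of_pos hden, div_le_div_iff₀ hden (by positivity)]
  nlinarith [sq_nonneg (|t| - y), sq_abs t]

theorem measurable (y : ℝ) : Measurable (conjugatePoissonKernel y) := by
  unfold conjugatePoissonKernel
  fun_prop

end conjugatePoissonKernel

variable {E : Type*} [NormedAddCommGroup E] [NormedSpace ℝ E]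

theorem integrable_conjugatePoissonKernel_smul {μ : Measure ℝ} {φ : ℝ → E} (hφ : Integrable φ μ)
    {y : ℝ} (hy : 0 < y) (a : ℝ) :
    Integrable (fun x => conjugatePoissonKernel y (x - a) • φ x) μ :=
  hφ.bdd_smul (1 / (2 * y))
    ((conjugatePoissonKernel.measurable y).comp (measurable_sub_const a)).aestronglyMeasurable
    (ae_of_all _ fun x => conjugatePoissonKernel.abs_le hy (x - a))

theorem tendsto_integral_sq_div_sq_add_sq_smul {μ : Measure ℝ} [NullSingletonClass μ] {g : ℝ → E}
    (hg : Integrable g μ) :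
    Tendsto (fun y : ℝ => ∫ t, (t ^ 2 / (t ^ 2 + y ^ 2)) • g t ∂μ) (𝓝 0) (𝓝 (∫ t, g t ∂μ)) := by
  have hle_one (y t : ℝ) : ‖t ^ 2 / (t ^ 2 + y ^ 2)‖ ≤ 1 := by
    rw [Real.norm_of_nonneg (by positivity)]
    exact div_le_one_of_le₀ (by nlinarith [sq_nonneg y]) (by positivity)
  have hlim {t : ℝ} (ht : t ≠ 0) : Tendsto (fun y : ℝ => t ^ 2 / (t ^ 2 + y ^ 2)) (𝓝 0) (𝓝 1) := by
    have hcont : ContinuousAt (fun y : ℝ => t ^ 2 / (t ^ 2 + y ^ 2)) 0 := by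
      fun_prop (disch := positivity)
    simpa [ht] using hcont.tendsto
  refine tendsto_integral_filter_of_dominated_convergence (fun t => ‖g t‖) ?_ ?_ hg.norm ?_
  · have hmeas (y : ℝ) : Measurable fun t : ℝ => t ^ 2 / (t ^ 2 + y ^ 2) := by fun_prop
    exact .of_forall fun y => (hmeas y).aestronglyMeasurable.smul hg.aestronglyMeasurable
  · refine .of_forall fun y => ae_of_all _ fun t => ?_
    rw [norm_smul]
    exact mul_le_of_le_one_left (norm_nonneg _) (hle_one y t)
  · filter_upwards [Measure.ae_ne μ 0] with t ht
    simpa only [one_smul] using (hlim ht).smul_const (g t)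

theorem integrable_inv_smul_of_isBigO_rpow {ψ : ℝ → E} (hψ : Integrable ψ) {α : ℝ} (hα : 0 < α)
    (hO : ψ =O[𝓝 0] fun t => |t| ^ α) : Integrable fun t => t⁻¹ • ψ t := by
  obtain ⟨C, hC⟩ := hO.bound
  obtain ⟨r, hr, hball⟩ := Metric.eventually_nhds_iff_ball.mp hC
  have hmeas : AEStronglyMeasurable (fun t : ℝ => t⁻¹ • ψ t) :=
    measurable_inv.aestronglyMeasurable.smul hψ.aestronglyMeasurable
  have hbound : ∀ t ∈ Metric.ball (0 : ℝ) r, t ≠ 0 → ‖t⁻¹ • ψ t‖ ≤ C * ‖t‖ ^ (-(1 - α)) := by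
    intro t ht ht0
    have hpos : 0 < |t| := abs_pos.mpr ht0
    calc ‖t⁻¹ • ψ t‖ = |t|⁻¹ * ‖ψ t‖ := by rw [norm_smul, norm_inv, Real.norm_eq_abs]
      _ ≤ |t|⁻¹ * (C * |t| ^ α) := by
          gcongr
          simpa only [Real.norm_of_nonneg (Real.rpow_nonneg hpos.le α)] using hball t ht
      _ = C * ‖t‖ ^ (-(1 - α)) := by
          rw [neg_sub, Real.norm_eq_abs, Real.rpow_sub_one hpos.ne']
          ring
  have hnear : IntegrableOn (fun t => t⁻¹ • ψ t) (Metric.ball 0 r) := by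
    refine integrableOn_ball_of_norm_le_rpow (C := C) (α := 1 - α) (by simp) (by simpa) ?_ hmeas
    filter_upwards [ae_restrict_mem measurableSet_ball, Measure.ae_ne _ 0] using hbound
  have hfar : IntegrableOn (fun t => t⁻¹ • ψ t) (Metric.ball 0 r)ᶜ := by
    refine hψ.integrableOn.bdd_smul r⁻¹ measurable_inv.aestronglyMeasurable ?_
    filter_upwards [ae_restrict_mem measurableSet_ball.compl] with t ht
    rw [norm_inv]
    exact inv_anti₀ hr (by simpa using ht)
  simpa only [Set.union_compl_self, integrableOn_univ] using hnear.union hfar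

theorem integrable_inv_smul_sub_of_isBigO_rpow {φ : ℝ → E} (hφ : Integrable φ) {a α : ℝ}
    (hα : 0 < α) (hO : (fun x => φ x - φ a) =O[𝓝 a] fun x => |x - a| ^ α) :
    Integrable fun t => t⁻¹ • (φ (a + t) - φ (a - t)) := by
  refine integrable_inv_smul_of_isBigO_rpow
    ((hφ.comp_add_left a).sub (hφ.comp_sub_left a)) hα ?_
  have hright : (fun t => φ (a + t) - φ a) =O[𝓝 0] fun t => |t| ^ α := by
    have hadd : Tendsto (fun t => a + t) (𝓝 0) (𝓝 a) := by
      simpa using (continuous_const_add a).tendsto 0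
    simpa only [Function.comp_def, add_sub_cancel_left] using hO.comp_tendsto hadd
  have hleft : (fun t => φ (a - t) - φ a) =O[𝓝 0] fun t => |t| ^ α := by
    have hsub : Tendsto (fun t => a - t) (𝓝 0) (𝓝 a) := by
      simpa using (continuous_sub_left a).tendsto 0
    simpa only [Function.comp_def, sub_sub_cancel_left, abs_neg] using hO.comp_tendsto hsub
  simpa only [sub_sub_sub_cancel_right] using hright.sub hleft

theorem conjugate_poisson_kernel_integral_converges_general [CompleteSpace E] {lam : ℝ} {φ : ℝ → E}
    (hint : ∀ y > 0, Integrable fun x => conjugatePoissonKernel y (x - lam) • φ x)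
    (hDini : Integrable fun t => t⁻¹ • (φ (lam + t) - φ (lam - t))) :
    Tendsto (fun y => ∫ x, conjugatePoissonKernel y (x - lam) • φ x) (𝓝[>] 0)
      (𝓝 ((1 / 2 : ℝ) • ∫ t, t⁻¹ • (φ (lam + t) - φ (lam - t)))) := by
  have hlim := (tendsto_integral_sq_div_sq_add_sq_smul hDini).const_smul (1 / 2 : ℝ)
  refine (hlim.mono_left nhdsWithin_le_nhds).congr' ?_
  filter_upwards [self_mem_nhdsWithin] with y hy
  rw [integral_odd_smul_eq_half_integral_smul_sub (conjugatePoissonKernel.odd y) (hint y hy)]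
  simp only [conjugatePoissonKernel.eq_mul_inv, smul_smul]

/-- If `φ : ℝ → ℂ` is bounded, measurable, compactly supported and satisfies a Hölder
condition at `lam` with exponent `α ∈ (0, 1]`, then the integrals
`∫ φ(x) · (x - lam) / ((x - lam)² + y²) dx` converge to some limit `L` as `y → 0⁺`. -/
theorem conjugate_poisson_kernel_integral_converges
    (lam : ℝ) (α : ℝ) (hα : α ∈ Set.Ioc (0 : ℝ) 1)
    (φ : ℝ → ℂ) (hmeas : Measurable φ)
    (hbdd : ∃ M : ℝ, ∀ x : ℝ, ‖φ x‖ ≤ M) (hsupp : HasCompactSupport φ)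
    (C : ℝ) (hC : 0 ≤ C)
    (hHolder : ∀ x : ℝ, ‖φ x - φ lam‖ ≤ C * |x - lam| ^ α) :
    ∃ L : ℂ,
      Tendsto (fun y : ℝ => ∫ x : ℝ, ((x - lam) / ((x - lam) ^ 2 + y ^ 2)) • φ x)
        (𝓝[>] 0) (𝓝 L) := by
  obtain ⟨M, hM⟩ := hbdd
  have hφ : Integrable φ := memLp_one_iff_integrable.mp <|
    hsupp.memLp_of_bound hmeas.aestronglyMeasurable M (ae_of_all _ hM)
  have hO : (fun x => φ x - φ lam) =O[𝓝 lam] fun x => |x - lam| ^ α :=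
    .of_bound C <| .of_forall fun x => (hHolder x).trans (by gcongr; exact le_abs_self _)
  exact ⟨_, conjugate_poisson_kernel_integral_converges_general
    (fun _ hy => integrable_conjugatePoissonKernel_smul hφ hy lam)
    (integrable_inv_smul_sub_of_isBigO_rpow hφ hα.1 hO)⟩
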